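/- For every 1 < p < ∞ and every complex-valued f ∈ C_0^∞(ℝⁿ \ {0}), the Sobolev-type inequality ‖f‖_{L^p(ℝⁿ)} ≤ (p/n) ‖E f‖_{L^p(ℝⁿ)} holds, where E f(x) = x·∇f(x). Moreover equality holds if and only if f = 0. -/

import Mathlib

open MeasureTheory Real

/-- The Euler operator `E f (x) = x·∇f(x)`. -/
noncomputable def eulerOp {n : ℕ} (f : EuclideanSpace ℝ (Fin n) → ℂ)
    (x : EuclideanSpace ℝ (Fin n)) : ℂ :=
  fderiv ℝ f x x

/-!
Integrating by parts along the dilations of an `n`-dimensional space gives `∫ E g = -n ∫ g`. For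
`g = ‖f‖ ^ p`, where `|E g| ≤ p ‖f‖ ^ (p - 1) ‖E f‖`, Young's inequality with exponents
`p / (p - 1)` and `p`, applied to `‖f‖ ^ (p - 1)` and `(p / n) ‖E f‖`, absorbs all of `∫ ‖f‖ ^ p`
except for one copy and leaves `∫ ‖f‖ ^ p ≤ (p / n) ^ p ∫ ‖E f‖ ^ p`.

In the case of equality Young's inequality is an equality at every point, so `E g ≤ -c g` with
`c = n (p - 1) / p > 0`. Then `t ^ c * g (t x)` decreases in `t`, and it vanishes at `t = 0`;
hence `g = 0`.
-/

open Module (finBasis finrank finrank_pos)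

section Dilation

variable {V : Type*} [NormedAddCommGroup V] [NormedSpace ℝ V]

theorem hasDerivAt_rpow_mul_comp_smul {φ : V → ℝ} (hφ : Differentiable ℝ φ) (c : ℝ) (x : V)
    {t : ℝ} (ht : 0 < t) :
    HasDerivAt (fun s : ℝ ↦ s ^ c * φ (s • x))
      (t ^ (c - 1) * (c * φ (t • x) + fderiv ℝ φ (t • x) (t • x))) t := by
  have hray : HasDerivAt (fun s : ℝ ↦ s • x) x t := by
    simpa using (hasDerivAt_id t).smul_const x
  have hcomp : HasDerivAt (fun s : ℝ ↦ φ (s • x)) (fderiv ℝ φ (t • x) x) t :=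
    (hφ (t • x)).hasFDerivAt.comp_hasDerivAt t hray
  refine ((hasDerivAt_rpow_const (p := c) (.inl ht.ne')).mul hcomp).congr_deriv ?_
  have hpow : t ^ c = t ^ (c - 1) * t := by
    rw [← rpow_add_one ht.ne', sub_add_cancel]
  rw [map_smul, smul_eq_mul, hpow]
  ring

theorem antitoneOn_rpow_mul_comp_smul {φ : V → ℝ} (hφ : Differentiable ℝ φ) {c : ℝ} (hc : 0 ≤ c)
    (hle : ∀ x, fderiv ℝ φ x x ≤ -c * φ x) (x : V) :
    AntitoneOn (fun t : ℝ ↦ t ^ c * φ (t • x)) (Set.Ici 0) := by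
  have hderiv {t : ℝ} (ht : t ∈ interior (Set.Ici 0)) :=
    hasDerivAt_rpow_mul_comp_smul hφ c x (show 0 < t by simpa using ht)
  refine antitoneOn_of_deriv_nonpos (convex_Ici 0) ?_
    (fun t ht ↦ (hderiv ht).differentiableAt.differentiableWithinAt) fun t ht ↦ ?_
  · have hcont := hφ.continuous
    exact ((continuous_rpow_const hc).mul (by fun_prop)).continuousOn
  · rw [(hderiv ht).deriv]
    have ht₀ : 0 ≤ t := interior_subset ht
    refine mul_nonpos_of_nonneg_of_nonpos (rpow_nonneg ht₀ _) ?_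
    linarith [hle (t • x)]

theorem nonpos_of_fderiv_apply_self_le {φ : V → ℝ} (hφ : Differentiable ℝ φ) {c : ℝ} (hc : 0 < c)
    (hle : ∀ x, fderiv ℝ φ x x ≤ -c * φ x) (x : V) : φ x ≤ 0 := by
  simpa [zero_rpow hc.ne'] using
    antitoneOn_rpow_mul_comp_smul hφ hc.le hle x (Set.mem_Ici.2 le_rfl)
      (Set.mem_Ici.2 zero_le_one) zero_le_one

end Dilation

section CompactSupport

variable {V : Type*} [NormedAddCommGroup V] {G : Type*} [NormedAddCommGroup G] {g : V → G} {p : ℝ}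

theorem hasCompactSupport_norm_rpow (hp : p ≠ 0) (hgc : HasCompactSupport g) :
    HasCompactSupport fun x ↦ ‖g x‖ ^ p :=
  hgc.comp_left (g := fun z ↦ ‖z‖ ^ p) (by simp [hp])

section Euler

variable [NormedSpace ℝ V] [NormedSpace ℝ G]

theorem continuous_fderiv_apply_self (hg : ContDiff ℝ 1 g) :
    Continuous fun x ↦ fderiv ℝ g x x :=
  (hg.continuous_fderiv one_ne_zero).clm_apply continuous_id

theorem hasCompactSupport_fderiv_apply_self (hgc : HasCompactSupport g) :
    HasCompactSupport fun x ↦ fderiv ℝ g x x :=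
  (hgc.fderiv ℝ).mono fun x hx h ↦ hx (by simp [h])

end Euler

variable [MeasurableSpace V] [BorelSpace V] {μ : Measure V} [IsFiniteMeasureOnCompacts μ]

theorem integrable_norm_rpow_of_hasCompactSupport (hp : 0 < p) (hg : Continuous g)
    (hgc : HasCompactSupport g) : Integrable (fun x ↦ ‖g x‖ ^ p) μ :=
  (hg.norm.rpow_const fun _ ↦ .inr hp.le).integrable_of_hasCompactSupport
    (hasCompactSupport_norm_rpow hp.ne' hgc)

variable [NormedSpace ℝ V] [NormedSpace ℝ G]

theorem integrable_norm_fderiv_apply_self_rpow (hp : 0 < p) (hg : ContDiff ℝ 1 g)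
    (hgc : HasCompactSupport g) : Integrable (fun x ↦ ‖fderiv ℝ g x x‖ ^ p) μ :=
  integrable_norm_rpow_of_hasCompactSupport hp (continuous_fderiv_apply_self hg)
    (hasCompactSupport_fderiv_apply_self hgc)

theorem integrable_fderiv_apply_self (hg : ContDiff ℝ 1 g) (hgc : HasCompactSupport g) :
    Integrable (fun x ↦ fderiv ℝ g x x) μ :=
  (continuous_fderiv_apply_self hg).integrable_of_hasCompactSupport
    (hasCompactSupport_fderiv_apply_self hgc)

theorem integrable_clm_smul_fderiv (hg : ContDiff ℝ 1 g) (hgc : HasCompactSupport g)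
    (ℓ : V →L[ℝ] ℝ) (v : V) : Integrable (fun x ↦ ℓ x • fderiv ℝ g x v) μ :=
  (ℓ.continuous.smul ((hg.continuous_fderiv one_ne_zero).clm_apply
    continuous_const)).integrable_of_hasCompactSupport (hgc.fderiv_apply ℝ v).smul_left

end CompactSupport

section IntegrationByParts

variable {V : Type*} [NormedAddCommGroup V] [NormedSpace ℝ V] [FiniteDimensional ℝ V]
  [MeasurableSpace V] [BorelSpace V] {μ : Measure V} [μ.IsAddHaarMeasure]
  {G : Type*} [NormedAddCommGroup G] [NormedSpace ℝ G] {g : V → G}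

theorem integral_clm_smul_fderiv (hg : ContDiff ℝ 1 g) (hgc : HasCompactSupport g)
    (ℓ : V →L[ℝ] ℝ) (v : V) : ∫ x, ℓ x • fderiv ℝ g x v ∂μ = -(ℓ v • ∫ x, g x ∂μ) := by
  have hint : Integrable (fun x ↦ ℓ v • g x) μ :=
    (hg.continuous.integrable_of_hasCompactSupport hgc).smul (ℓ v)
  have hint_smul : Integrable (fun x ↦ ℓ x • g x) μ :=
    (ℓ.continuous.smul hg.continuous).integrable_of_hasCompactSupport hgc.smul_left
  rw [integral_smul_fderiv_eq_neg_fderiv_smul_of_integrable (by simpa using hint)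
    (integrable_clm_smul_fderiv hg hgc ℓ v) hint_smul
    (fun _ _ ↦ ℓ.differentiableAt) (fun x _ ↦ hg.differentiable one_ne_zero x)]
  simp only [ContinuousLinearMap.fderiv, integral_smul]

theorem integral_fderiv_apply_self (hg : ContDiff ℝ 1 g) (hgc : HasCompactSupport g) :
    ∫ x, fderiv ℝ g x x ∂μ = -((finrank ℝ V : ℝ) • ∫ x, g x ∂μ) := by
  let b := finBasis ℝ V
  let coord i : V →L[ℝ] ℝ := (b.coord i).toContinuousLinearMap
  have hcoord (i) : coord i (b i) = 1 := by simp [coord]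
  have hexpand (x : V) : fderiv ℝ g x x = ∑ i, coord i x • fderiv ℝ g x (b i) := by
    conv_lhs => rw [← b.sum_repr x, map_sum]
    simp [coord, b.sum_repr]
  calc ∫ x, fderiv ℝ g x x ∂μ = ∑ i, ∫ x, coord i x • fderiv ℝ g x (b i) ∂μ := by
        simp_rw [hexpand]
        exact integral_finsetSum _ fun i _ ↦ integrable_clm_smul_fderiv hg hgc (coord i) (b i)
    _ = ∑ _i : Fin (finrank ℝ V), -∫ x, g x ∂μ := by
        simp_rw [integral_clm_smul_fderiv hg hgc, hcoord, one_smul]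
    _ = -((finrank ℝ V : ℝ) • ∫ x, g x ∂μ) := by simp [Nat.cast_smul_eq_nsmul]

end IntegrationByParts

theorem mul_rpow_sub_one_mul_le {p : ℝ} (hp : 1 < p) {a b : ℝ} (ha : 0 ≤ a) (hb : 0 ≤ b) :
    p * a ^ (p - 1) * b ≤ (p - 1) * a ^ p + b ^ p := by
  have hp' : p - 1 ≠ 0 := by linarith
  have hyoung := young_inequality_of_nonneg (rpow_nonneg ha (p - 1)) hb
    (HolderConjugate.conjExponent hp).symm
  rw [conjExponent, ← rpow_mul ha, mul_div_cancel₀ _ hp'] at hyoung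
  calc p * a ^ (p - 1) * b = p * (a ^ (p - 1) * b) := by ring
    _ ≤ p * (a ^ p / (p / (p - 1)) + b ^ p / p) := by gcongr
    _ = (p - 1) * a ^ p + b ^ p := by field_simp

section Deficit

variable {V : Type*} [NormedAddCommGroup V] [NormedSpace ℝ V]
  {F : Type*} [NormedAddCommGroup F] [InnerProductSpace ℝ F] {p : ℝ} {f : V → F}

theorem abs_fderiv_norm_rpow_apply_le (hp : 1 < p) (hf : Differentiable ℝ f) (x v : V) :
    |fderiv ℝ (fun y ↦ ‖f y‖ ^ p) x v| ≤ p * ‖f x‖ ^ (p - 1) * ‖fderiv ℝ f x v‖ := by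
  have hpow : ‖f x‖ ^ (p - 1) = ‖f x‖ ^ (p - 2) * ‖f x‖ := by
    rw [← rpow_add_one' (norm_nonneg _) (by linarith)]
    ring_nf
  calc |fderiv ℝ (fun y ↦ ‖f y‖ ^ p) x v|
      = p * ‖f x‖ ^ (p - 2) * |inner ℝ (f x) (fderiv ℝ f x v)| := by
        have hcoef : 0 ≤ p * ‖f x‖ ^ (p - 2) := by positivity
        simp [hf.fderiv_norm_rpow hp, abs_mul, abs_of_nonneg hcoef]
    _ ≤ p * ‖f x‖ ^ (p - 2) * (‖f x‖ * ‖fderiv ℝ f x v‖) := by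
        gcongr
        exact abs_real_inner_le_norm _ _
    _ = p * ‖f x‖ ^ (p - 1) * ‖fderiv ℝ f x v‖ := by rw [hpow]; ring

/-- The pointwise deficit in the Euler–Sobolev inequality: the gap in the bound that Cauchy–Schwarz
and Young's inequality give for `-(p / n) E (‖f‖ ^ p)`, where `n = dim V` and `E g x = g' (x) x`.
It is scaled so that its integral is the difference of the `p`-th powers of the two sides. -/
noncomputable def eulerDeficit (p : ℝ) (f : V → F) (x : V) : ℝ :=
  (p - 1) * ‖f x‖ ^ p + (p / finrank ℝ V) ^ p * ‖fderiv ℝ f x x‖ ^ p +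
    p / finrank ℝ V * fderiv ℝ (fun y ↦ ‖f y‖ ^ p) x x

theorem eulerDeficit_nonneg (hp : 1 < p) (hf : Differentiable ℝ f) (x : V) :
    0 ≤ eulerDeficit p f x := by
  have hr : 0 ≤ p / finrank ℝ V := by positivity
  suffices -(p / finrank ℝ V * fderiv ℝ (fun y ↦ ‖f y‖ ^ p) x x) ≤
      (p - 1) * ‖f x‖ ^ p + (p / finrank ℝ V) ^ p * ‖fderiv ℝ f x x‖ ^ p by
    unfold eulerDeficit
    linarith
  calc -(p / finrank ℝ V * fderiv ℝ (fun y ↦ ‖f y‖ ^ p) x x)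
      = p / finrank ℝ V * -fderiv ℝ (fun y ↦ ‖f y‖ ^ p) x x := by ring
    _ ≤ p / finrank ℝ V * (p * ‖f x‖ ^ (p - 1) * ‖fderiv ℝ f x x‖) :=
        mul_le_mul_of_nonneg_left
          ((neg_le_abs _).trans (abs_fderiv_norm_rpow_apply_le hp hf x x)) hr
    _ = p * ‖f x‖ ^ (p - 1) * (p / finrank ℝ V * ‖fderiv ℝ f x x‖) := by ring
    _ ≤ (p - 1) * ‖f x‖ ^ p + (p / finrank ℝ V * ‖fderiv ℝ f x x‖) ^ p :=
        mul_rpow_sub_one_mul_le hp (norm_nonneg _) (by positivity)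
    _ = (p - 1) * ‖f x‖ ^ p + (p / finrank ℝ V) ^ p * ‖fderiv ℝ f x x‖ ^ p := by
        rw [mul_rpow hr (norm_nonneg _)]

theorem continuous_eulerDeficit (hp : 1 < p) (hf : ContDiff ℝ 1 f) :
    Continuous (eulerDeficit p f) := by
  have hEf : Continuous fun x ↦ ‖fderiv ℝ f x x‖ ^ p :=
    (continuous_fderiv_apply_self hf).norm.rpow_const fun _ ↦ .inr (by linarith)
  have hpow : ContDiff ℝ 1 fun x ↦ ‖f x‖ ^ p := hf.norm_rpow hp
  exact ((hpow.continuous.const_mul _).add (hEf.const_mul _)).add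
    ((continuous_fderiv_apply_self hpow).const_mul _)

theorem eq_zero_of_eulerDeficit_eq_zero [FiniteDimensional ℝ V] [Nontrivial V] (hp : 1 < p)
    (hf : Differentiable ℝ f) (hzero : ∀ x, eulerDeficit p f x = 0) : f = 0 := by
  have hp₀ : 0 < p := by linarith
  have hp₁ : 0 < p - 1 := by linarith
  have hn : 0 < (finrank ℝ V : ℝ) := by exact_mod_cast finrank_pos
  have hdecay (x : V) : fderiv ℝ (fun y ↦ ‖f y‖ ^ p) x x ≤
      -(finrank ℝ V * (p - 1) / p) * ‖f x‖ ^ p := by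
    have hx : (p - 1) * ‖f x‖ ^ p + (p / finrank ℝ V) ^ p * ‖fderiv ℝ f x x‖ ^ p +
        p / finrank ℝ V * fderiv ℝ (fun y ↦ ‖f y‖ ^ p) x x = 0 := hzero x
    have hEf : 0 ≤ (p / finrank ℝ V) ^ p * ‖fderiv ℝ f x x‖ ^ p := by positivity
    refine le_of_mul_le_mul_left ?_ (show 0 < p / finrank ℝ V by positivity)
    calc p / finrank ℝ V * fderiv ℝ (fun y ↦ ‖f y‖ ^ p) x x ≤ -((p - 1) * ‖f x‖ ^ p) := by
          linarith
      _ = p / finrank ℝ V * (-(finrank ℝ V * (p - 1) / p) * ‖f x‖ ^ p) := by field_simp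
  ext x
  have hnonpos : ‖f x‖ ^ p ≤ 0 :=
    nonpos_of_fderiv_apply_self_le (hf.norm_rpow hp) (by positivity) hdecay x
  simpa using (rpow_eq_zero (norm_nonneg _) hp₀.ne').1 (hnonpos.antisymm (by positivity))

theorem integrable_eulerDeficit [MeasurableSpace V] [BorelSpace V] {μ : Measure V}
    [IsFiniteMeasureOnCompacts μ] (hp : 1 < p) (hf : ContDiff ℝ 1 f) (hfc : HasCompactSupport f) :
    Integrable (eulerDeficit p f) μ := by
  have hp₀ : 0 < p := by linarith
  have hf_int : Integrable (fun x ↦ ‖f x‖ ^ p) μ :=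
    integrable_norm_rpow_of_hasCompactSupport hp₀ hf.continuous hfc
  have hEpow_int : Integrable (fun x ↦ fderiv ℝ (fun y ↦ ‖f y‖ ^ p) x x) μ :=
    integrable_fderiv_apply_self (hf.norm_rpow hp) (hasCompactSupport_norm_rpow hp₀.ne' hfc)
  exact ((hf_int.const_mul _).add
    ((integrable_norm_fderiv_apply_self_rpow hp₀ hf hfc).const_mul _)).add (hEpow_int.const_mul _)

end Deficit

section Sobolev

variable {V : Type*} [NormedAddCommGroup V] [NormedSpace ℝ V] [FiniteDimensional ℝ V]
  [Nontrivial V] [MeasurableSpace V] [BorelSpace V] {μ : Measure V} [μ.IsAddHaarMeasure]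
  {F : Type*} [NormedAddCommGroup F] [InnerProductSpace ℝ F] {p : ℝ} {f : V → F}

theorem integral_eulerDeficit (hp : 1 < p) (hf : ContDiff ℝ 1 f) (hfc : HasCompactSupport f) :
    ∫ x, eulerDeficit p f x ∂μ =
      (p / finrank ℝ V) ^ p * ∫ x, ‖fderiv ℝ f x x‖ ^ p ∂μ - ∫ x, ‖f x‖ ^ p ∂μ := by
  have hp₀ : 0 < p := by linarith
  have hn : (finrank ℝ V : ℝ) ≠ 0 := by exact_mod_cast finrank_pos.ne'
  have hpow : ContDiff ℝ 1 fun x ↦ ‖f x‖ ^ p := hf.norm_rpow hp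
  have hpowc : HasCompactSupport fun x ↦ ‖f x‖ ^ p := hasCompactSupport_norm_rpow hp₀.ne' hfc
  have hf_int : Integrable (fun x ↦ (p - 1) * ‖f x‖ ^ p) μ :=
    (integrable_norm_rpow_of_hasCompactSupport hp₀ hf.continuous hfc).const_mul _
  have hEf_int : Integrable (fun x ↦ (p / finrank ℝ V) ^ p * ‖fderiv ℝ f x x‖ ^ p) μ :=
    (integrable_norm_fderiv_apply_self_rpow hp₀ hf hfc).const_mul _
  have hEpow_int :
      Integrable (fun x ↦ p / finrank ℝ V * fderiv ℝ (fun y ↦ ‖f y‖ ^ p) x x) μ :=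
    (integrable_fderiv_apply_self hpow hpowc).const_mul _
  unfold eulerDeficit
  rw [integral_add (hf_int.fun_add hEf_int) hEpow_int, integral_add hf_int hEf_int,
    integral_const_mul, integral_const_mul, integral_const_mul,
    integral_fderiv_apply_self hpow hpowc, smul_eq_mul]
  field_simp
  ring

theorem integral_norm_rpow_le_integral_norm_fderiv_apply_self_rpow (hp : 1 < p)
    (hf : ContDiff ℝ 1 f) (hfc : HasCompactSupport f) :
    ∫ x, ‖f x‖ ^ p ∂μ ≤ (p / finrank ℝ V) ^ p * ∫ x, ‖fderiv ℝ f x x‖ ^ p ∂μ := by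
  rw [← sub_nonneg, ← integral_eulerDeficit hp hf hfc]
  exact integral_nonneg (eulerDeficit_nonneg hp (hf.differentiable one_ne_zero))

theorem integral_norm_rpow_eq_integral_norm_fderiv_apply_self_rpow_iff (hp : 1 < p)
    (hf : ContDiff ℝ 1 f) (hfc : HasCompactSupport f) :
    ∫ x, ‖f x‖ ^ p ∂μ = (p / finrank ℝ V) ^ p * ∫ x, ‖fderiv ℝ f x x‖ ^ p ∂μ ↔ f = 0 := by
  have hfd : Differentiable ℝ f := hf.differentiable one_ne_zero
  refine ⟨fun heq ↦ eq_zero_of_eulerDeficit_eq_zero hp hfd ?_, ?_⟩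
  · have hint : ∫ x, eulerDeficit p f x ∂μ = 0 := by
      rw [integral_eulerDeficit hp hf hfc, heq, sub_self]
    have hae : eulerDeficit p f =ᵐ[μ] 0 := (integral_eq_zero_iff_of_nonneg
      (eulerDeficit_nonneg hp hfd) (integrable_eulerDeficit hp hf hfc)).1 hint
    exact congrFun (((continuous_eulerDeficit hp hf).ae_eq_iff_eq μ continuous_zero).1 hae)
  · rintro rfl
    have hp₀ : p ≠ 0 := by linarith
    simp [zero_rpow hp₀]

theorem euler_Lp_sobolev_general (hp : 1 < p) (hf : ContDiff ℝ 1 f) (hfc : HasCompactSupport f) :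
    (∫ x, ‖f x‖ ^ p ∂μ) ^ (1 / p) ≤
      (p / finrank ℝ V) * (∫ x, ‖fderiv ℝ f x x‖ ^ p ∂μ) ^ (1 / p) ∧
    ((∫ x, ‖f x‖ ^ p ∂μ) ^ (1 / p) =
      (p / finrank ℝ V) * (∫ x, ‖fderiv ℝ f x x‖ ^ p ∂μ) ^ (1 / p) ↔ f = 0) := by
  have hp₀ : 0 < p := by linarith
  have hf_nonneg : 0 ≤ ∫ x, ‖f x‖ ^ p ∂μ := integral_nonneg fun x ↦ by positivity
  have hEf_nonneg : 0 ≤ ∫ x, ‖fderiv ℝ f x x‖ ^ p ∂μ := integral_nonneg fun x ↦ by positivity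
  have hrhs : p / finrank ℝ V * (∫ x, ‖fderiv ℝ f x x‖ ^ p ∂μ) ^ (1 / p) =
      ((p / finrank ℝ V) ^ p * ∫ x, ‖fderiv ℝ f x x‖ ^ p ∂μ) ^ (1 / p) := by
    rw [mul_rpow (by positivity) hEf_nonneg, one_div, rpow_rpow_inv (by positivity) hp₀.ne']
  rw [hrhs, rpow_left_inj hf_nonneg (by positivity) (by positivity),
    integral_norm_rpow_eq_integral_norm_fderiv_apply_self_rpow_iff hp hf hfc]
  exact ⟨rpow_le_rpow hf_nonneg
    (integral_norm_rpow_le_integral_norm_fderiv_apply_self_rpow hp hf hfc) (by positivity), .rfl⟩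

end Sobolev

/-- For `1 < p < ∞` and `f ∈ C₀^∞(ℝⁿ \ {0})`, the Sobolev-type inequality
`‖f‖_{L^p} ≤ (p/n) ‖E f‖_{L^p}` holds, with equality iff `f = 0`. -/
theorem euler_Lp_sobolev {n : ℕ} (p : ℝ) (hp : 1 < p)
    (f : EuclideanSpace ℝ (Fin n) → ℂ)
    (hf : ContDiff ℝ (⊤ : ℕ∞) f) (hfc : HasCompactSupport f)
    (hf0 : (0 : EuclideanSpace ℝ (Fin n)) ∉ tsupport f) :
    (∫ x, ‖f x‖ ^ p) ^ (1 / p) ≤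
      (p / n) * (∫ x, ‖eulerOp f x‖ ^ p) ^ (1 / p) ∧
    ((∫ x, ‖f x‖ ^ p) ^ (1 / p) =
      (p / n) * (∫ x, ‖eulerOp f x‖ ^ p) ^ (1 / p) ↔ f = 0) := by
  rcases n.eq_zero_or_pos with rfl | hn
  · obtain rfl : f = 0 := by
      ext x
      rw [Subsingleton.elim x 0, image_eq_zero_of_notMem_tsupport hf0, Pi.zero_apply]
    have hp₀ : p ≠ 0 := by linarith
    simp [hp₀]
  · have : Nontrivial (EuclideanSpace ℝ (Fin n)) :=
      Module.nontrivial_of_finrank_pos (R := ℝ) (by simpa using hn)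
    simpa [eulerOp] using euler_Lp_sobolev_general (μ := volume) hp (hf.of_le (by simp)) hfc
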